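/- arXiv:1502.02752 — 14 statements merged into one kernel-verified Lean document; each statement's English description precedes it below -/
import Mathlib

section
/- Let a, b : ℤ → ℝ → ℝ be differentiable functions of t satisfying, for all n ∈ ℤ and t ∈ ℝ, the system b_n' = b_n(b_{n-1}a_{n-1} − a_n b_{n+1}) and a_n' = a_n(1 − a_n)(b_n − b_{n+1}). Define u_n(t) = b_n(t)(1 − a_n(t)) and v_n(t) = a_n(t)b_n(t). Then u and v satisfy the relativistic Toda lattice: u_n' = u_n(v_{n-1} − v_n) and v_n' = v_n(v_{n-1} − v_{n+1} + u_n − u_{n+1}) for all n ∈ ℤ and t ∈ ℝ. -/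
/-- If `a, b` satisfy the RTL system in Flaschka-type variables, then
`u_n = b_n (1 - a_n)`, `v_n = a_n b_n` satisfy the relativistic Toda lattice. -/
theorem stmt_0 (a b : ℤ → ℝ → ℝ)
    (ha : ∀ n, Differentiable ℝ (a n)) (hb : ∀ n, Differentiable ℝ (b n))
    (heqb : ∀ (n : ℤ) (t : ℝ),
      deriv (b n) t = b n t * (b (n - 1) t * a (n - 1) t - a n t * b (n + 1) t))
    (heqa : ∀ (n : ℤ) (t : ℝ),
      deriv (a n) t = a n t * (1 - a n t) * (b n t - b (n + 1) t)) :
    ∀ (n : ℤ) (t : ℝ),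
      deriv (fun s => b n s * (1 - a n s)) t
        = b n t * (1 - a n t) * (a (n - 1) t * b (n - 1) t - a n t * b n t) ∧
      deriv (fun s => a n s * b n s) t
        = a n t * b n t * (a (n - 1) t * b (n - 1) t - a (n + 1) t * b (n + 1) t
            + b n t * (1 - a n t) - b (n + 1) t * (1 - a (n + 1) t)) := by
  intro n t
  have hA : HasDerivAt (a n) (a n t * (1 - a n t) * (b n t - b (n + 1) t)) t :=
    heqa n t ▸ (ha n t).hasDerivAt
  have hB : HasDerivAt (b n)
      (b n t * (b (n - 1) t * a (n - 1) t - a n t * b (n + 1) t)) t :=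
    heqb n t ▸ (hb n t).hasDerivAt
  -- Both equations are the product rule followed by a polynomial identity.
  constructor
  · refine (hB.mul (hA.const_sub 1)).deriv.trans ?_
    ring
  · refine (hA.mul hB).deriv.trans ?_
    ring
end

section
/- Fix a real number λ ≠ 0 and let u, v : ℤ → ℝ → ℝ be differentiable functions of t. For each n ∈ ℤ and t ∈ ℝ define the 2×2 real matrices U_n(t) = [[λ² + u_n(t), λ], [λ v_n(t), 0]] and V_n(t) = [[λ²/2 − v_{n-1}(t), λ], [λ v_{n-1}(t), −λ²/2 − u_n(t) − v_n(t)]]. Then the zero-curvature equation d/dt U_n(t) + U_n(t)V_n(t) − V_{n+1}(t)U_n(t) = 0 holds for all n ∈ ℤ and t ∈ ℝ if and only if u and v satisfy the relativistic Toda lattice: u_n' = u_n(v_{n-1} − v_n) and v_n' = v_n(v_{n-1} − v_{n+1} + u_n − u_{n+1}) for all n and t. -/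
/-!
The equivalence holds pointwise in `n` and `t`. All powers of `l` cancel in the second column of
`dU_n/dt + U_n V_n - V_{n+1} U_n`, which vanishes identically; the first column is the residual of
the `u`-equation and `l` times the residual of the `v`-equation (`zeroCurvature_eq`). Since
`l ≠ 0`, its vanishing is the lattice.
-/


/-- The Lax matrix `U_n(t)`. -/
noncomputable def Umat (l : ℝ) (u v : ℤ → ℝ → ℝ) (n : ℤ) (t : ℝ) :
    Matrix (Fin 2) (Fin 2) ℝ :=
  !![l ^ 2 + u n t, l; l * v n t, 0]

/-- The Lax matrix `V_n(t)`. -/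
noncomputable def Vmat (l : ℝ) (u v : ℤ → ℝ → ℝ) (n : ℤ) (t : ℝ) :
    Matrix (Fin 2) (Fin 2) ℝ :=
  !![l ^ 2 / 2 - v (n - 1) t, l; l * v (n - 1) t, -l ^ 2 / 2 - u n t - v n t]

/-- The zero-curvature expression equals the matrix of residuals of the two lattice equations. -/
lemma zeroCurvature_eq (l : ℝ) (u v : ℤ → ℝ → ℝ) (n : ℤ) (t : ℝ)
    (hv : DifferentiableAt ℝ (v n) t) :
    Matrix.of (fun i j => deriv (fun s => Umat l u v n s i j) t)
        + Umat l u v n t * Vmat l u v n t - Vmat l u v (n + 1) t * Umat l u v n t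
      = !![deriv (u n) t - u n t * (v (n - 1) t - v n t), 0;
          l * (deriv (v n) t
            - v n t * (v (n - 1) t - v (n + 1) t + u n t - u (n + 1) t)), 0] := by
  have hderiv : Matrix.of (fun i j => deriv (fun s => Umat l u v n s i j) t)
      = !![deriv (u n) t, 0; l * deriv (v n) t, 0] := by
    ext i j
    rw [Matrix.of_apply]
    fin_cases i <;> fin_cases j <;> simp [Umat, deriv_const_mul l hv]
  rw [hderiv]
  ext i j
  fin_cases i <;> fin_cases j <;> simp [Umat, Vmat] <;> ring

/-- The zero-curvature equation `dU_n/dt + U_n V_n - V_{n+1} U_n = 0` (derivative taken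
entrywise) holds for all `n, t` iff `u, v` satisfy the relativistic Toda lattice. -/
theorem stmt_1 (l : ℝ) (hl : l ≠ 0) (u v : ℤ → ℝ → ℝ)
    (hu : ∀ n, Differentiable ℝ (u n)) (hv : ∀ n, Differentiable ℝ (v n)) :
    (∀ (n : ℤ) (t : ℝ),
        Matrix.of (fun i j => deriv (fun s => Umat l u v n s i j) t)
            + Umat l u v n t * Vmat l u v n t - Vmat l u v (n + 1) t * Umat l u v n t = 0)
      ↔ (∀ (n : ℤ) (t : ℝ),
          deriv (u n) t = u n t * (v (n - 1) t - v n t) ∧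
          deriv (v n) t = v n t * (v (n - 1) t - v (n + 1) t + u n t - u (n + 1) t)) := by
  refine forall_congr' fun n => forall_congr' fun t => ?_
  rw [zeroCurvature_eq l u v n t (hv n t), ← Matrix.ext_iff]
  simp [Fin.forall_fin_two, hl, sub_eq_zero]
end

section
/- Let F, G : ℤ → ℝ → ℝ be differentiable functions of t that never vanish and satisfy the bilinear RTL system: for all n ∈ ℤ and t ∈ ℝ, G_{n-1}'F_n − G_{n-1}F_n' + F_nG_{n-1} = F_{n-1}G_n and F_n'G_n − F_nG_n' + F_nG_n = F_{n-1}G_{n+1}. Define u_n = G_{n-1}'/G_{n-1} − F_n'/F_n + 1 and v_n = F_n'/F_n − G_n'/G_n + 1. Then u and v are differentiable and satisfy the relativistic Toda lattice: u_n' = u_n(v_{n-1} − v_n) and v_n' = v_n(v_{n-1} − v_{n+1} + u_n − u_{n+1}) for all n and t. -/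
/-!
Dividing the bilinear equations by `F_n G_{n-1}` and by `F_n G_n` gives the closed forms
`u_n = F_{n-1} G_n / (F_n G_{n-1})` and `v_n = F_{n-1} G_{n+1} / (F_n G_n)`. The lattice equations
are then the logarithmic derivatives of these quotients (`deriv_mul_div_mul`): the bracketed
factors on the right-hand sides telescope to exactly the same combinations of `F'/F` and `G'/G`.
-/

/-- The logarithmic derivative rule for `ab / (cd)`, multiplied out. -/
lemma deriv_mul_div_mul {a b c d : ℝ → ℝ} {t : ℝ}
    (ha : DifferentiableAt ℝ a t) (hb : DifferentiableAt ℝ b t)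
    (hc : DifferentiableAt ℝ c t) (hd : DifferentiableAt ℝ d t)
    (ha0 : a t ≠ 0) (hb0 : b t ≠ 0) (hc0 : c t ≠ 0) (hd0 : d t ≠ 0) :
    deriv (fun s => a s * b s / (c s * d s)) t
      = a t * b t / (c t * d t)
        * (deriv a t / a t + deriv b t / b t - deriv c t / c t - deriv d t / d t) := by
  have h := ((ha.hasDerivAt.mul hb.hasDerivAt).div (hc.hasDerivAt.mul hd.hasDerivAt)
    (mul_ne_zero hc0 hd0)).deriv
  refine Eq.trans h ?_
  simp only [Pi.mul_apply]
  field_simp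
  ring

/-- If nowhere-vanishing twice differentiable `F, G` satisfy the bilinear RTL
system, then `u_n = G_{n-1}'/G_{n-1} - F_n'/F_n + 1`, `v_n = F_n'/F_n - G_n'/G_n + 1`
are differentiable and satisfy the relativistic Toda lattice. -/
theorem stmt_2 (F G : ℤ → ℝ → ℝ)
    (hF : ∀ n, Differentiable ℝ (F n)) (hG : ∀ n, Differentiable ℝ (G n))
    (hF' : ∀ n, Differentiable ℝ (deriv (F n))) (hG' : ∀ n, Differentiable ℝ (deriv (G n)))
    (hFne : ∀ (n : ℤ) (t : ℝ), F n t ≠ 0) (hGne : ∀ (n : ℤ) (t : ℝ), G n t ≠ 0)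
    (hbil1 : ∀ (n : ℤ) (t : ℝ),
      deriv (G (n - 1)) t * F n t - G (n - 1) t * deriv (F n) t + F n t * G (n - 1) t
        = F (n - 1) t * G n t)
    (hbil2 : ∀ (n : ℤ) (t : ℝ),
      deriv (F n) t * G n t - F n t * deriv (G n) t + F n t * G n t
        = F (n - 1) t * G (n + 1) t) :
    (∀ n : ℤ, Differentiable ℝ
        (fun t => deriv (G (n - 1)) t / G (n - 1) t - deriv (F n) t / F n t + 1)) ∧
    (∀ n : ℤ, Differentiable ℝ
        (fun t => deriv (F n) t / F n t - deriv (G n) t / G n t + 1)) ∧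
    ∀ (n : ℤ) (t : ℝ),
      deriv (fun s => deriv (G (n - 1)) s / G (n - 1) s - deriv (F n) s / F n s + 1) t
        = (deriv (G (n - 1)) t / G (n - 1) t - deriv (F n) t / F n t + 1) *
          ((deriv (F (n - 1)) t / F (n - 1) t - deriv (G (n - 1)) t / G (n - 1) t + 1)
            - (deriv (F n) t / F n t - deriv (G n) t / G n t + 1)) ∧
      deriv (fun s => deriv (F n) s / F n s - deriv (G n) s / G n s + 1) t
        = (deriv (F n) t / F n t - deriv (G n) t / G n t + 1) *
          ((deriv (F (n - 1)) t / F (n - 1) t - deriv (G (n - 1)) t / G (n - 1) t + 1)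
            - (deriv (F (n + 1)) t / F (n + 1) t - deriv (G (n + 1)) t / G (n + 1) t + 1)
            + (deriv (G (n - 1)) t / G (n - 1) t - deriv (F n) t / F n t + 1)
            - (deriv (G n) t / G n t - deriv (F (n + 1)) t / F (n + 1) t + 1)) := by
  have hu : ∀ (n : ℤ) (t : ℝ),
      deriv (G (n - 1)) t / G (n - 1) t - deriv (F n) t / F n t + 1
        = F (n - 1) t * G n t / (F n t * G (n - 1) t) := by
    intro n t
    have h1 := hFne n t
    have h2 := hGne (n - 1) t
    rw [← hbil1 n t]
    field_simp
  have hv : ∀ (n : ℤ) (t : ℝ),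
      deriv (F n) t / F n t - deriv (G n) t / G n t + 1
        = F (n - 1) t * G (n + 1) t / (F n t * G n t) := by
    intro n t
    have h1 := hFne n t
    have h2 := hGne n t
    rw [← hbil2 n t]
    field_simp
  refine ⟨fun n => (((hG' _).div (hG _) (hGne _)).sub ((hF' _).div (hF _) (hFne _))).add_const 1,
    fun n => (((hF' _).div (hF _) (hFne _)).sub ((hG' _).div (hG _) (hGne _))).add_const 1,
    fun n t => ⟨?_, ?_⟩⟩
  · rw [funext (hu n), deriv_mul_div_mul (hF _ t) (hG _ t) (hF _ t) (hG _ t)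
      (hFne _ t) (hGne _ t) (hFne _ t) (hGne _ t), ← hu n t]
    ring
  · rw [funext (hv n), deriv_mul_div_mul (hF _ t) (hG _ t) (hF _ t) (hG _ t)
      (hFne _ t) (hGne _ t) (hFne _ t) (hGne _ t), ← hv n t]
    ring
end

section
/- (Bäcklund transformation for the bilinear RTL.) Let λ, μ, γ be real constants. Let F, G : ℤ → ℝ → ℝ be differentiable in t, nowhere vanishing, and satisfy the bilinear RTL system: for all n ∈ ℤ and t ∈ ℝ, G_{n-1}'F_n − G_{n-1}F_n' + F_nG_{n-1} = F_{n-1}G_n and F_n'G_n − F_nG_n' + F_nG_n = F_{n-1}G_{n+1}. Let F', G' : ℤ → ℝ → ℝ be differentiable in t and satisfy for all n, t: (i) (d/dt F_n)F'_n − F_n(d/dt F'_n) − λ F_{n-1}F'_{n+1} + μ F_nF'_n = 0; (ii) (d/dt G_n)G'_n − G_n(d/dt G'_n) − λ G_{n-1}G'_{n+1} + μ G_nG'_n = 0; (iii) G_{n+1}F'_n − F_nG'_{n+1} − λ G_nF'_{n+1} = 0; (iv) λ G_{n-1}F'_{n+1} + G_nF'_n + γ F_nG'_n = 0. Then F', G'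 also satisfy the bilinear RTL system: (d/dt G'_{n-1})F'_n − G'_{n-1}(d/dt F'_n) + F'_nG'_{n-1} = F'_{n-1}G'_n and (d/dt F'_n)G'_n − F'_n(d/dt G'_n) + F'_nG'_n = F'_{n-1}G'_{n+1} for all n, t. -/
/-!
The argument is pointwise in `t` and purely algebraic. Multiply each target equation by a
nonvanishing product (`F_n G_{n-1}` for the first, `F_n G_n` for the second). Relations (i), (ii)
then trade the derivatives of `F'`, `G'` for those of `F`, `G`, and the bilinear system for `F, G`
removes those. For the first equation, what remains vanishes by (iv) at `n` and at `n - 1`;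
for the second, by (iii) at `n` and at `n - 1`.
-/

/-- Bäcklund transformation for the bilinear RTL: if `F, G` solve the bilinear RTL
system and `F', G'` are related to `F, G` by the Bäcklund relations (i)-(iv), then
`F', G'` also solve the bilinear RTL system. -/
theorem stmt_3 (lam mu gam : ℝ) (F G F' G' : ℤ → ℝ → ℝ)
    (hF : ∀ n, Differentiable ℝ (F n)) (hG : ∀ n, Differentiable ℝ (G n))
    (hF'd : ∀ n, Differentiable ℝ (F' n)) (hG'd : ∀ n, Differentiable ℝ (G' n))
    (hFne : ∀ (n : ℤ) (t : ℝ), F n t ≠ 0) (hGne : ∀ (n : ℤ) (t : ℝ), G n t ≠ 0)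
    (hbil1 : ∀ (n : ℤ) (t : ℝ),
      deriv (G (n - 1)) t * F n t - G (n - 1) t * deriv (F n) t + F n t * G (n - 1) t
        = F (n - 1) t * G n t)
    (hbil2 : ∀ (n : ℤ) (t : ℝ),
      deriv (F n) t * G n t - F n t * deriv (G n) t + F n t * G n t
        = F (n - 1) t * G (n + 1) t)
    (hbt1 : ∀ (n : ℤ) (t : ℝ),
      deriv (F n) t * F' n t - F n t * deriv (F' n) t - lam * F (n - 1) t * F' (n + 1) t
        + mu * F n t * F' n t = 0)
    (hbt2 : ∀ (n : ℤ) (t : ℝ),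
      deriv (G n) t * G' n t - G n t * deriv (G' n) t - lam * G (n - 1) t * G' (n + 1) t
        + mu * G n t * G' n t = 0)
    (hbt3 : ∀ (n : ℤ) (t : ℝ),
      G (n + 1) t * F' n t - F n t * G' (n + 1) t - lam * G n t * F' (n + 1) t = 0)
    (hbt4 : ∀ (n : ℤ) (t : ℝ),
      lam * G (n - 1) t * F' (n + 1) t + G n t * F' n t + gam * F n t * G' n t = 0) :
    ∀ (n : ℤ) (t : ℝ),
      deriv (G' (n - 1)) t * F' n t - G' (n - 1) t * deriv (F' n) t + F' n t * G' (n - 1) t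
        = F' (n - 1) t * G' n t ∧
      deriv (F' n) t * G' n t - F' n t * deriv (G' n) t + F' n t * G' n t
        = F' (n - 1) t * G' (n + 1) t := by
  intro n t
  have e1 : n - 1 + 1 = n := by ring
  have b1 := hbil1 n t
  have b2 := hbil2 n t
  have t1 := hbt1 n t
  have t2 := hbt2 n t
  have t2m := hbt2 (n - 1) t
  have t3 := hbt3 n t
  have t3m := hbt3 (n - 1) t
  have t4 := hbt4 n t
  have t4m := hbt4 (n - 1) t
  rw [e1] at t2m t3m t4m
  constructor
  · apply mul_left_cancel₀ (mul_ne_zero (hFne n t) (hGne (n - 1) t))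
    linear_combination (-(F n t * F' n t)) * t2m + G (n - 1) t * G' (n - 1) t * t1
      + F' n t * G' (n - 1) t * b1 + G' (n - 1) t * F (n - 1) t * t4 - F n t * G' n t * t4m
  · apply mul_left_cancel₀ (mul_ne_zero (hFne n t) (hGne n t))
    linear_combination (-(G n t * G' n t)) * t1 + F n t * F' n t * t2
      + F' n t * G' n t * b2 + G' n t * F (n - 1) t * t3 - F n t * G' (n + 1) t * t3m
end

section
/- Define F, G : ℤ → ℝ → ℝ by F_n(t) = (2/3)^{n+1} − 2·(2/3)^n − e^{−t} and G_n(t) = (2/3)^n + e^{−t}. Then F and G satisfy the bilinear RTL system: for all n ∈ ℤ and t ∈ ℝ, G_{n-1}'F_n − G_{n-1}F_n' + F_nG_{n-1} = F_{n-1}G_n and F_n'G_n − F_nG_n' + F_nG_n = F_{n-1}G_{n+1}. -/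
/-- The explicit one-soliton tau functions
`F_n(t) = (2/3)^{n+1} - 2 (2/3)^n - e^{-t}`, `G_n(t) = (2/3)^n + e^{-t}`
satisfy the bilinear RTL system. -/
theorem stmt_5 (F G : ℤ → ℝ → ℝ)
    (hF : ∀ (n : ℤ) (t : ℝ),
      F n t = ((2 : ℝ) / 3) ^ (n + 1) - 2 * ((2 : ℝ) / 3) ^ n - Real.exp (-t))
    (hG : ∀ (n : ℤ) (t : ℝ), G n t = ((2 : ℝ) / 3) ^ n + Real.exp (-t)) :
    ∀ (n : ℤ) (t : ℝ),
      deriv (G (n - 1)) t * F n t - G (n - 1) t * deriv (F n) t + F n t * G (n - 1) t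
        = F (n - 1) t * G n t ∧
      deriv (F n) t * G n t - F n t * deriv (G n) t + F n t * G n t
        = F (n - 1) t * G (n + 1) t := by
  intro n t
  have hexp : HasDerivAt (fun s : ℝ => Real.exp (-s)) (-Real.exp (-t)) t := by
    simpa using (hasDerivAt_neg t).exp
  have hG' : ∀ m : ℤ, deriv (G m) t = -Real.exp (-t) := by
    intro m
    rw [funext (hG m)]
    exact (hexp.const_add _).deriv
  have hF' : ∀ m : ℤ, deriv (F m) t = Real.exp (-t) := by
    intro m
    rw [funext (hF m)]
    simpa using (hexp.const_sub (((2 : ℝ) / 3) ^ (m + 1) - 2 * ((2 : ℝ) / 3) ^ m)).deriv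
  have hq : (2 : ℝ) / 3 ≠ 0 := by norm_num
  -- In terms of `x = (2/3)^n` and `e = exp (-t)`, both equations are polynomial identities.
  simp only [hF', hG', hF, hG, sub_add_cancel, zpow_add_one₀ hq, zpow_sub_one₀ hq]
  constructor <;> ring
end

section
/- Define F, G : ℤ → ℝ → ℝ by F_n(t) = (2/3)^{n+1} − 2·(2/3)^n − e^{−t} and G_n(t) = (2/3)^n + e^{−t} (so that F_n(t) < 0 and G_n(t) > 0 for all n, t, hence both are nowhere zero). Define u_n = G_{n-1}'/G_{n-1} − F_n'/F_n + 1 and v_n = F_n'/F_n − G_n'/G_n + 1. Then u and v satisfy the relativistic Toda lattice: u_n' = u_n(v_{n-1} − v_n) and v_n' = v_n(v_{n-1} − v_{n+1} + u_n − u_{n+1}) for all n ∈ ℤ and t ∈ ℝ. -/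
/-!
Put `x = (2/3)^n` and `e = exp (-t)`. Then `G_n = x + e` and `F_n = -(4/3 * x + e)`, so every tau
function is, up to sign, of the form `a + e` with `a` a positive multiple of `x`: the values of `a`
for `F_{n-1}, G_{n-1}, F_n, G_n, F_{n+1}, G_{n+1}` are `2x, 3x/2, 4x/3, x, 8x/9, 2x/3`.
The logarithmic derivative of `a + e` is `-e / (a + e)`, whose derivative is `a * e / (a + e)^2`
(`hasDerivAt_logDeriv_tau`). Both lattice equations thereby become identities between rational
functions of `x` and `e`, with denominators that are positive for `x, e > 0`.
-/

lemma hasDerivAt_logDeriv_tau {a : ℝ} (ha : 0 < a) (t : ℝ) :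
    HasDerivAt (fun s => -Real.exp (-s) / (a + Real.exp (-s)))
      (a * Real.exp (-t) / (a + Real.exp (-t)) ^ 2) t := by
  have he : HasDerivAt (fun s : ℝ => Real.exp (-s)) (-Real.exp (-t)) t := by
    simpa using (hasDerivAt_neg t).exp
  have hpos : a + Real.exp (-t) ≠ 0 := by positivity
  refine (he.fun_neg.fun_div (he.const_add a) hpos).congr_deriv ?_
  ring

/-- For the explicit tau functions `F_n(t) = (2/3)^{n+1} - 2 (2/3)^n - e^{-t}`,
`G_n(t) = (2/3)^n + e^{-t}` (which satisfy `F_n(t) < 0 < G_n(t)` and hence never vanish),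
the functions `u_n = G_{n-1}'/G_{n-1} - F_n'/F_n + 1`, `v_n = F_n'/F_n - G_n'/G_n + 1`
satisfy the relativistic Toda lattice. -/
theorem stmt_6 (F G : ℤ → ℝ → ℝ)
    (hF : ∀ (n : ℤ) (t : ℝ),
      F n t = ((2 : ℝ) / 3) ^ (n + 1) - 2 * ((2 : ℝ) / 3) ^ n - Real.exp (-t))
    (hG : ∀ (n : ℤ) (t : ℝ), G n t = ((2 : ℝ) / 3) ^ n + Real.exp (-t)) :
    (∀ (n : ℤ) (t : ℝ), F n t < 0 ∧ 0 < G n t) ∧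
    ∀ (n : ℤ) (t : ℝ),
      deriv (fun s => deriv (G (n - 1)) s / G (n - 1) s - deriv (F n) s / F n s + 1) t
        = (deriv (G (n - 1)) t / G (n - 1) t - deriv (F n) t / F n t + 1) *
          ((deriv (F (n - 1)) t / F (n - 1) t - deriv (G (n - 1)) t / G (n - 1) t + 1)
            - (deriv (F n) t / F n t - deriv (G n) t / G n t + 1)) ∧
      deriv (fun s => deriv (F n) s / F n s - deriv (G n) s / G n s + 1) t
        = (deriv (F n) t / F n t - deriv (G n) t / G n t + 1) *
          ((deriv (F (n - 1)) t / F (n - 1) t - deriv (G (n - 1)) t / G (n - 1) t + 1)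
            - (deriv (F (n + 1)) t / F (n + 1) t - deriv (G (n + 1)) t / G (n + 1) t + 1)
            + (deriv (G (n - 1)) t / G (n - 1) t - deriv (F n) t / F n t + 1)
            - (deriv (G n) t / G n t - deriv (F (n + 1)) t / F (n + 1) t + 1)) := by
  have hr : ((2 : ℝ) / 3) ≠ 0 := by norm_num
  have hx (n : ℤ) : 0 < ((2 : ℝ) / 3) ^ n := by positivity
  have hF' (n : ℤ) (t : ℝ) : F n t = -(4 / 3 * ((2 : ℝ) / 3) ^ n + Real.exp (-t)) := by
    rw [hF, zpow_add_one₀ hr]; ring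
  have he (t : ℝ) : HasDerivAt (fun s : ℝ => Real.exp (-s)) (-Real.exp (-t)) t := by
    simpa using (hasDerivAt_neg t).exp
  have hlogG (n : ℤ) (t : ℝ) :
      deriv (G n) t / G n t = -Real.exp (-t) / (((2 : ℝ) / 3) ^ n + Real.exp (-t)) := by
    rw [funext (hG n), ((he t).const_add _).deriv]
  have hlogF (n : ℤ) (t : ℝ) :
      deriv (F n) t / F n t = -Real.exp (-t) / (4 / 3 * ((2 : ℝ) / 3) ^ n + Real.exp (-t)) := by
    rw [funext (hF' n), ((he t).const_add _).fun_neg.deriv, neg_div_neg_eq]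
  refine ⟨fun n t => ⟨?_, ?_⟩, fun n t => ?_⟩
  · rw [hF', neg_lt_zero]
    positivity
  · rw [hG]
    positivity
  · simp only [hlogG, hlogF]
    have hdG (m : ℤ) := hasDerivAt_logDeriv_tau (hx m) t
    have hdF (m : ℤ) := hasDerivAt_logDeriv_tau (a := 4 / 3 * ((2 : ℝ) / 3) ^ m) (by positivity) t
    have hx0 := hx n
    have he0 := Real.exp_pos (-t)
    rw [(((hdG (n - 1)).fun_sub (hdF n)).add_const 1).deriv,
      (((hdF n).fun_sub (hdG n)).add_const 1).deriv, zpow_sub_one₀ hr, zpow_add_one₀ hr]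
    generalize ((2 : ℝ) / 3) ^ n = x at hx0 ⊢
    generalize Real.exp (-t) = e at he0 ⊢
    -- Denominators rewritten as integer linear forms over a constant, so that `field_simp` can
    -- match them with the nonvanishing facts below.
    have e1 : x * (2 / 3 : ℝ)⁻¹ + e = (3 * x + 2 * e) / 2 := by ring
    have e2 : 4 / 3 * x + e = (4 * x + 3 * e) / 3 := by ring
    have e3 : 4 / 3 * (x * (2 / 3 : ℝ)⁻¹) + e = 2 * x + e := by ring
    have e4 : 4 / 3 * (x * (2 / 3 : ℝ)) + e = (8 * x + 9 * e) / 9 := by ring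
    have e5 : x * (2 / 3 : ℝ) + e = (2 * x + 3 * e) / 3 := by ring
    rw [e1, e2, e3, e4, e5]
    have h1 : 3 * x + 2 * e ≠ 0 := by positivity
    have h2 : 4 * x + 3 * e ≠ 0 := by positivity
    have h3 : 2 * x + e ≠ 0 := by positivity
    have h4 : 8 * x + 9 * e ≠ 0 := by positivity
    have h5 : 2 * x + 3 * e ≠ 0 := by positivity
    have h6 : x + e ≠ 0 := by positivity
    constructor <;> field_simp <;> ring
end

section
/- Let ε ≠ 0 be a real constant and let F, G : ℤ × ℤ → ℝ (written F_n^k, G_n^k) be nowhere vanishing and satisfy the fully discrete bilinear RTL system: for all n, k ∈ ℤ, (−1/(2ε) − 1)·G_n^{k+1}F_{n+1}^{k−1} + (1/(2ε))·G_n^{k−1}F_{n+1}^{k+1} + G_{n+1}^{k+1}F_n^{k−1} = 0 and (1/(2ε) + 1)·G_n^{k−1}F_n^{k+1} − (1/(2ε))·G_n^{k+1}F_n^{k−1} − G_{n+1}^{k+1}F_{n−1}^{k−1} = 0. Define u_n^k = G_{n−1}^k/F_n^k and v_n^k = F_n^k/G_n^k. Then for all n, k ∈ ℤ: (−1/(2ε)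 − 1)·u_{n+1}^{k+1}v_{n+1}^{k+1} + u_{n+1}^{k−1}v_n^{k−1} + (1/(2ε))·u_{n+1}^{k−1}v_{n+1}^{k+1} = 0 and (1/(2ε) + 1)·v_n^{k+1}u_{n+1}^{k+1}v_{n+1}^{k+1} − (1/(2ε))·v_n^{k−1}u_{n+1}^{k+1}v_{n+1}^{k+1} − u_n^{k−1}v_{n−1}^{k−1}v_n^{k−1} = 0. -/
/-!
Substituting `u = G_{n-1}/F_n` and `v = F_n/G_n`, the products telescope, and the two nonlinear
left-hand sides become the bilinear ones divided by `G_{n+1}^{k+1} F_{n+1}^{k-1}` and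
`G_{n+1}^{k+1} G_n^{k-1}` respectively; hence they vanish.
-/

/-- Nonlinear form of the fully discrete bilinear RTL system: if nowhere-vanishing
`F, G` satisfy the fully discrete bilinear RTL system with step `ε ≠ 0`, then
`u_n^k = G_{n-1}^k / F_n^k`, `v_n^k = F_n^k / G_n^k` satisfy the nonlinear equations. -/
theorem stmt_7 (ε : ℝ) (hε : ε ≠ 0) (F G : ℤ → ℤ → ℝ)
    (hFne : ∀ n k : ℤ, F n k ≠ 0) (hGne : ∀ n k : ℤ, G n k ≠ 0)
    (heq1 : ∀ n k : ℤ,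
      (-1 / (2 * ε) - 1) * G n (k + 1) * F (n + 1) (k - 1)
        + (1 / (2 * ε)) * G n (k - 1) * F (n + 1) (k + 1)
        + G (n + 1) (k + 1) * F n (k - 1) = 0)
    (heq2 : ∀ n k : ℤ,
      (1 / (2 * ε) + 1) * G n (k - 1) * F n (k + 1)
        - (1 / (2 * ε)) * G n (k + 1) * F n (k - 1)
        - G (n + 1) (k + 1) * F (n - 1) (k - 1) = 0)
    (u v : ℤ → ℤ → ℝ)
    (hu : ∀ n k : ℤ, u n k = G (n - 1) k / F n k)
    (hv : ∀ n k : ℤ, v n k = F n k / G n k) :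
    ∀ n k : ℤ,
      (-1 / (2 * ε) - 1) * u (n + 1) (k + 1) * v (n + 1) (k + 1)
          + u (n + 1) (k - 1) * v n (k - 1)
          + (1 / (2 * ε)) * u (n + 1) (k - 1) * v (n + 1) (k + 1) = 0 ∧
      (1 / (2 * ε) + 1) * v n (k + 1) * u (n + 1) (k + 1) * v (n + 1) (k + 1)
          - (1 / (2 * ε)) * v n (k - 1) * u (n + 1) (k + 1) * v (n + 1) (k + 1)
          - u n (k - 1) * v (n - 1) (k - 1) * v n (k - 1) = 0 := by
  intro n k
  simp only [hu, hv, add_sub_cancel_right]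
  have e1 := heq1 n k
  have e2 := heq2 n k
  have f1 := hFne n (k - 1)
  have f2 := hFne (n + 1) (k - 1)
  have f3 := hFne (n + 1) (k + 1)
  have g1 := hGne n (k - 1)
  have g2 := hGne n (k + 1)
  have g3 := hGne (n + 1) (k + 1)
  have g4 := hGne (n - 1) (k - 1)
  rw [neg_div] at e1 ⊢
  -- The coefficient stays opaque, so that only values of `F` and `G` occur as denominators.
  generalize 1 / (2 * ε) = a at e1 e2 ⊢
  constructor
  -- After cancellation, each nonlinear equation is the bilinear one divided by a nonzero product.
  · have h := congrArg (· / (G (n + 1) (k + 1) * F (n + 1) (k - 1))) e1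
    simp only [zero_div] at h
    rw [← h]
    field_simp
    ring
  · have h := congrArg (· / (G (n + 1) (k + 1) * G n (k - 1))) e2
    simp only [zero_div] at h
    rw [← h]
    field_simp
end

section
/- Let ε ≠ 0 be a real constant and let F, G : ℤ × ℤ → ℝ be nowhere vanishing and satisfy the fully discrete bilinear RTL system: for all n, k ∈ ℤ, (−1/(2ε) − 1)·G_n^{k+1}F_{n+1}^{k−1} + (1/(2ε))·G_n^{k−1}F_{n+1}^{k+1} + G_{n+1}^{k+1}F_n^{k−1} = 0 and (1/(2ε) + 1)·G_n^{k−1}F_n^{k+1} − (1/(2ε))·G_n^{k+1}F_n^{k−1} − G_{n+1}^{k+1}F_{n−1}^{k−1} = 0. Define u_n^k = G_{n−1}^k/F_n^k, v_n^k = F_n^k/G_n^k, U_n^k = u_n^{k+1}/u_n^{k−1} and V_n^k = v_n^{k+1}/v_n^{k−1}. Then for all n, k ∈ ℤ: (1 + 1/(2ε))·(U_n^{k+1} − U_n^{k−1}) = v_{n−1}^k/v_n^{k+2} − v_{n−1}^{k−2}/v_n^k and (1 + 1/(2ε))·(V_n^{k+1} − V_n^{k−1}) = u_n^k v_{n−1}^k/(u_{n+1}^{k+2}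 v_{n+1}^{k+2}) − u_n^{k−2} v_{n−1}^{k−2}/(u_{n+1}^k v_{n+1}^k). -/
/-!
Dividing the first bilinear equation (with `n` shifted to `n - 1`) by `F_n^{k+1} G_{n-1}^{k-1}`, and
the second by `G_n^{k+1} F_n^{k-1}`, gives

* `(1 + 1/(2ε)) U_n^k = 1/(2ε) + v_{n-1}^{k-1} / v_n^{k+1}`,
* `(1 + 1/(2ε)) V_n^k = 1/(2ε) + u_n^{k-1} v_{n-1}^{k-1} / (u_{n+1}^{k+1} v_{n+1}^{k+1})`.

Subtracting each identity at `k - 1` from the same identity at `k + 1` cancels the constant `1/(2ε)`.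
-/

/-- The fully discrete RTL in the variables `U_n^k = u_n^{k+1}/u_n^{k-1}`,
`V_n^k = v_n^{k+1}/v_n^{k-1}`. -/
theorem stmt_8 (ε : ℝ) (hε : ε ≠ 0) (F G : ℤ → ℤ → ℝ)
    (hFne : ∀ n k : ℤ, F n k ≠ 0) (hGne : ∀ n k : ℤ, G n k ≠ 0)
    (heq1 : ∀ n k : ℤ,
      (-1 / (2 * ε) - 1) * G n (k + 1) * F (n + 1) (k - 1)
        + (1 / (2 * ε)) * G n (k - 1) * F (n + 1) (k + 1)
        + G (n + 1) (k + 1) * F n (k - 1) = 0)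
    (heq2 : ∀ n k : ℤ,
      (1 / (2 * ε) + 1) * G n (k - 1) * F n (k + 1)
        - (1 / (2 * ε)) * G n (k + 1) * F n (k - 1)
        - G (n + 1) (k + 1) * F (n - 1) (k - 1) = 0)
    (u v U V : ℤ → ℤ → ℝ)
    (hu : ∀ n k : ℤ, u n k = G (n - 1) k / F n k)
    (hv : ∀ n k : ℤ, v n k = F n k / G n k)
    (hU : ∀ n k : ℤ, U n k = u n (k + 1) / u n (k - 1))
    (hV : ∀ n k : ℤ, V n k = v n (k + 1) / v n (k - 1)) :
    ∀ n k : ℤ,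
      (1 + 1 / (2 * ε)) * (U n (k + 1) - U n (k - 1))
        = v (n - 1) k / v n (k + 2) - v (n - 1) (k - 2) / v n k ∧
      (1 + 1 / (2 * ε)) * (V n (k + 1) - V n (k - 1))
        = u n k * v (n - 1) k / (u (n + 1) (k + 2) * v (n + 1) (k + 2))
          - u n (k - 2) * v (n - 1) (k - 2) / (u (n + 1) k * v (n + 1) k) := by
  have keyU : ∀ n k : ℤ, (1 + 1 / (2 * ε)) * U n k
      = 1 / (2 * ε) + v (n - 1) (k - 1) / v n (k + 1) := by
    intro n k
    have h := heq1 (n - 1) k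
    rw [sub_add_cancel, neg_div] at h
    rw [hU, hu, hu, hv, hv]
    have h1 := hFne n (k + 1)
    have h2 := hFne n (k - 1)
    have h3 := hGne (n - 1) (k - 1)
    have h4 := hGne n (k + 1)
    generalize 1 / (2 * ε) = d at h ⊢
    field_simp
    linear_combination -h
  have keyV : ∀ n k : ℤ, (1 + 1 / (2 * ε)) * V n k
      = 1 / (2 * ε) + u n (k - 1) * v (n - 1) (k - 1)
        / (u (n + 1) (k + 1) * v (n + 1) (k + 1)) := by
    intro n k
    have h := heq2 n k
    rw [hV, hu, hu, hv, hv, hv, hv, add_sub_cancel_right]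
    have h1 := hFne n (k - 1)
    have h2 := hFne (n + 1) (k + 1)
    have h3 := hGne (n - 1) (k - 1)
    have h4 := hGne n (k + 1)
    have h5 := hGne n (k - 1)
    have h6 := hGne (n + 1) (k + 1)
    generalize 1 / (2 * ε) = d at h ⊢
    field_simp
    linear_combination h
  intro n k
  have e1 : k + 1 - 1 = k := by ring
  have e2 : k + 1 + 1 = k + 2 := by ring
  have e3 : k - 1 - 1 = k - 2 := by ring
  have e4 : k - 1 + 1 = k := by ring
  constructor
  · rw [mul_sub, keyU, keyU, e1, e2, e3, e4]
    ring
  · rw [mul_sub, keyV, keyV, e1, e2, e3, e4]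
    ring
end

section
/- Let u, v : ℤ → ℝ → ℝ be twice differentiable functions of t that never vanish and satisfy, for all n ∈ ℤ and t ∈ ℝ, u_n' = u_n·(v_{n−1}/v_n − 1) and v_n' = v_n·(u_n v_{n−1}/(u_{n+1} v_{n+1}) − 1). Define d_n = u_n'/u_n + 1 and c_n = v_n'/v_n + 1. Then d_n' = d_n(c_{n−1} − c_n) and c_n' = c_n(c_{n−1} − c_{n+1} + d_n − d_{n+1}) for all n ∈ ℤ and t ∈ ℝ; that is, (d, c) satisfies the relativistic Toda lattice. -/
/-!
The equations say that `d_n = v_{n-1} / v_n` and `c_n = u_n v_{n-1} / (u_{n+1} v_{n+1})`.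
Taking logarithmic derivatives of these quotients, `d_n' / d_n` and `c_n' / c_n` are signed sums of
`v_k' / v_k = c_k - 1` and `u_k' / u_k = d_k - 1`, in which the constants cancel.
-/

/-- If nowhere-vanishing twice differentiable `u, v` satisfy
`u_n' = u_n (v_{n-1}/v_n - 1)` and `v_n' = v_n (u_n v_{n-1}/(u_{n+1} v_{n+1}) - 1)`,
then `d_n = u_n'/u_n + 1`, `c_n = v_n'/v_n + 1` satisfy the relativistic Toda lattice. -/
theorem stmt_9 (u v : ℤ → ℝ → ℝ)
    (hu : ∀ n, Differentiable ℝ (u n)) (hv : ∀ n, Differentiable ℝ (v n))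
    (hu' : ∀ n, Differentiable ℝ (deriv (u n))) (hv' : ∀ n, Differentiable ℝ (deriv (v n)))
    (hune : ∀ (n : ℤ) (t : ℝ), u n t ≠ 0) (hvne : ∀ (n : ℤ) (t : ℝ), v n t ≠ 0)
    (hueq : ∀ (n : ℤ) (t : ℝ),
      deriv (u n) t = u n t * (v (n - 1) t / v n t - 1))
    (hveq : ∀ (n : ℤ) (t : ℝ),
      deriv (v n) t = v n t * (u n t * v (n - 1) t / (u (n + 1) t * v (n + 1) t) - 1)) :
    ∀ (n : ℤ) (t : ℝ),
      deriv (fun s => deriv (u n) s / u n s + 1) t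
        = (deriv (u n) t / u n t + 1) *
          ((deriv (v (n - 1)) t / v (n - 1) t + 1) - (deriv (v n) t / v n t + 1)) ∧
      deriv (fun s => deriv (v n) s / v n s + 1) t
        = (deriv (v n) t / v n t + 1) *
          ((deriv (v (n - 1)) t / v (n - 1) t + 1)
            - (deriv (v (n + 1)) t / v (n + 1) t + 1)
            + (deriv (u n) t / u n t + 1)
            - (deriv (u (n + 1)) t / u (n + 1) t + 1)) := by
  intro n t
  have hd : ∀ s, deriv (u n) s / u n s + 1 = v (n - 1) s / v n s := by
    intro s
    rw [hueq, mul_div_cancel_left₀ _ (hune n s), sub_add_cancel]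
  have hc : ∀ s, deriv (v n) s / v n s + 1
      = u n s * v (n - 1) s / (u (n + 1) s * v (n + 1) s) := by
    intro s
    rw [hveq, mul_div_cancel_left₀ _ (hvne n s), sub_add_cancel]
  have Du := fun k => (hu k t).hasDerivAt
  have Dv := fun k => (hv k t).hasDerivAt
  have h1 := hune n t
  have h2 := hune (n + 1) t
  have h3 := hvne n t
  have h4 := hvne (n + 1) t
  have h5 := hvne (n - 1) t
  constructor
  · rw [funext hd, hd t, ((Dv (n - 1)).fun_div (Dv n) h3).deriv]
    field_simp
    ring
  · rw [funext hc, hc t, (((Du n).fun_mul (Dv (n - 1))).fun_div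
      ((Du (n + 1)).fun_mul (Dv (n + 1))) (mul_ne_zero h2 h4)).deriv]
    field_simp
    ring
end

section
/- (Bäcklund transformation for the fully discrete bilinear RTL with ε = 1.) Let λ, μ, γ, α be real constants. Let F, G : ℤ × ℤ → ℝ be nowhere vanishing and satisfy, for all n, k ∈ ℤ: (A) −(3/2)·G_n^{k+1}F_{n+1}^{k−1} + (1/2)·G_n^{k−1}F_{n+1}^{k+1} + G_{n+1}^{k+1}F_n^{k−1} = 0 and (B) (3/2)·G_n^{k−1}F_n^{k+1} − (1/2)·G_n^{k+1}F_n^{k−1} − G_{n+1}^{k+1}F_{n−1}^{k−1} = 0. Let F', G' : ℤ × ℤ → ℝ satisfy for all n, k ∈ ℤ: (i) F_n^k G'_n{}^k + γ G_n^k F'_n{}^k − 2μ F_{n−1}^k G'_{n+1}{}^k = 0; (ii) F_{n+1}^k G'_n{}^k + (2/3)μ F_n^k G'_{n+1}{}^k + α G_n^k F'_{n+1}{}^k = 0; (iii) F_{n+1}^{k+1} F'_n{}^{k−1} + λ F_n^{k−1} F'_{n+1}{}^{k+1} + μ F_n^{k+1} F'_{n+1}{}^{k−1} = 0; (iv) G_{n+1}^{k+1}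 G'_n{}^{k−1} + λ G_n^{k−1} G'_{n+1}{}^{k+1} + μ G_n^{k+1} G'_{n+1}{}^{k−1} = 0. Then F', G' also satisfy equations (A) and (B) for all n, k ∈ ℤ. -/
/-!
Write `±` for the time levels `k ± 1`. Each relation (i), (ii) at the two levels `±` gives, after
cross-multiplication, an identity free of `gam`, respectively `alp`. Hence the left-hand side of
(A) for `F', G'`, multiplied by `F (n+1) (k+1) * G n (k-1)`, is a combination of (ii) at `±`, (iii),
(iv) and (A) for `F, G`; the left-hand side of (B) for `F', G'`, multiplied by
`F n (k+1) * G n (k-1)`, is a combination of (i) at `±`, (iii) at `n - 1`, (iv) and (B) for `F, G`.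
The multipliers do not vanish, and nothing is divided by `lam`, `mu`, `gam`, `alp`, so degenerate
parameters need no separate treatment.
-/

/-- Bäcklund transformation for the fully discrete bilinear RTL with `ε = 1`:
if nowhere-vanishing `F, G` satisfy the fully discrete bilinear RTL equations (A), (B),
and `F', G'` are related to `F, G` by the Bäcklund relations (i)-(iv), then `F', G'`
also satisfy (A) and (B). -/
theorem stmt_10 (lam mu gam alp : ℝ) (F G F' G' : ℤ → ℤ → ℝ)
    (hFne : ∀ n k : ℤ, F n k ≠ 0) (hGne : ∀ n k : ℤ, G n k ≠ 0)
    (hA : ∀ n k : ℤ,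
      -(3 / 2) * G n (k + 1) * F (n + 1) (k - 1)
        + (1 / 2) * G n (k - 1) * F (n + 1) (k + 1)
        + G (n + 1) (k + 1) * F n (k - 1) = 0)
    (hB : ∀ n k : ℤ,
      (3 / 2) * G n (k - 1) * F n (k + 1)
        - (1 / 2) * G n (k + 1) * F n (k - 1)
        - G (n + 1) (k + 1) * F (n - 1) (k - 1) = 0)
    (hbt1 : ∀ n k : ℤ,
      F n k * G' n k + gam * G n k * F' n k - 2 * mu * F (n - 1) k * G' (n + 1) k = 0)
    (hbt2 : ∀ n k : ℤ,
      F (n + 1) k * G' n k + (2 / 3) * mu * F n k * G' (n + 1) k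
        + alp * G n k * F' (n + 1) k = 0)
    (hbt3 : ∀ n k : ℤ,
      F (n + 1) (k + 1) * F' n (k - 1) + lam * F n (k - 1) * F' (n + 1) (k + 1)
        + mu * F n (k + 1) * F' (n + 1) (k - 1) = 0)
    (hbt4 : ∀ n k : ℤ,
      G (n + 1) (k + 1) * G' n (k - 1) + lam * G n (k - 1) * G' (n + 1) (k + 1)
        + mu * G n (k + 1) * G' (n + 1) (k - 1) = 0) :
    ∀ n k : ℤ,
      -(3 / 2) * G' n (k + 1) * F' (n + 1) (k - 1)
          + (1 / 2) * G' n (k - 1) * F' (n + 1) (k + 1)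
          + G' (n + 1) (k + 1) * F' n (k - 1) = 0 ∧
      (3 / 2) * G' n (k - 1) * F' n (k + 1)
          - (1 / 2) * G' n (k + 1) * F' n (k - 1)
          - G' (n + 1) (k + 1) * F' (n - 1) (k - 1) = 0 := by
  intro n k
  constructor
  · apply (mul_eq_zero.mp ?_).resolve_left (mul_ne_zero (hFne (n + 1) (k + 1)) (hGne n (k - 1)))
    -- The coefficients of `hbt2` at the two time levels are chosen so that `alp` cancels.
    linear_combination
      -(3 / 2) * G n (k - 1) * F' (n + 1) (k - 1) * hbt2 n (k + 1)
      + (3 / 2) * G n (k + 1) * F' (n + 1) (k + 1) * hbt2 n (k - 1)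
      + G n (k - 1) * G' (n + 1) (k + 1) * hbt3 n k
      + F' (n + 1) (k + 1) * G' n (k - 1) * hA n k
      - F' (n + 1) (k + 1) * F n (k - 1) * hbt4 n k
  · apply (mul_eq_zero.mp ?_).resolve_left (mul_ne_zero (hFne n (k + 1)) (hGne n (k - 1)))
    have h3 := hbt3 (n - 1) k
    rw [sub_add_cancel] at h3
    -- The coefficients of `hbt1` at the two time levels are chosen so that `gam` cancels.
    linear_combination
      -(1 / 2) * G n (k - 1) * F' n (k - 1) * hbt1 n (k + 1)
      + (1 / 2) * G n (k + 1) * F' n (k + 1) * hbt1 n (k - 1)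
      - G n (k - 1) * G' (n + 1) (k + 1) * h3
      + F' n (k + 1) * G' n (k - 1) * hB n k
      + F' n (k + 1) * F (n - 1) (k - 1) * hbt4 n k
end

section
/- Let c₁, c₂ be arbitrary real constants. Define F : ℤ × ℤ → ℝ by F_n^k = c₁·5^k·3^n + c₂·(√12)^k·(22/3)^n (integer powers of positive reals) and G : ℤ × ℤ → ℝ by G_n^k = 2·F_{n−1}^k − F_n^k. Then F and G satisfy the fully discrete bilinear RTL system with ε = 1: for all n, k ∈ ℤ, −(3/2)·G_n^{k+1}F_{n+1}^{k−1} + (1/2)·G_n^{k−1}F_{n+1}^{k+1} + G_{n+1}^{k+1}F_n^{k−1} = 0 and (3/2)·G_n^{k−1}F_n^{k+1} − (1/2)·G_n^{k+1}F_n^{k−1} − G_{n+1}^{k+1}F_{n−1}^{k−1} = 0. -/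
/-!
Write `F` as a sum of two exponentials `a ^ k * p ^ n`, with `(a², p) = (25, 3)` and `(12, 22/3)`.
On each exponential, `G` acts as multiplication by `2 / p - 1`. Both equations are quadratic in
the pair: the pure terms cancel because the coefficients satisfy `-3/2 + 1/2 + 1 = 0`, and the
mixed terms cancel by a numerical identity (a dispersion relation) between the two pairs `(a², p)`.
-/

/-- The explicit one-soliton solution
`F_n^k = c₁ 5^k 3^n + c₂ (√12)^k (22/3)^n`, `G_n^k = 2 F_{n-1}^k - F_n^k`
satisfies the fully discrete bilinear RTL system with `ε = 1`. -/
theorem stmt_11 (c₁ c₂ : ℝ) (F G : ℤ → ℤ → ℝ)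
    (hF : ∀ n k : ℤ,
      F n k = c₁ * (5 : ℝ) ^ k * (3 : ℝ) ^ n
        + c₂ * Real.sqrt 12 ^ k * ((22 : ℝ) / 3) ^ n)
    (hG : ∀ n k : ℤ, G n k = 2 * F (n - 1) k - F n k) :
    ∀ n k : ℤ,
      -(3 / 2) * G n (k + 1) * F (n + 1) (k - 1)
          + (1 / 2) * G n (k - 1) * F (n + 1) (k + 1)
          + G (n + 1) (k + 1) * F n (k - 1) = 0 ∧
      (3 / 2) * G n (k - 1) * F n (k + 1)
          - (1 / 2) * G n (k + 1) * F n (k - 1)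
          - G (n + 1) (k + 1) * F (n - 1) (k - 1) = 0 := by
  intro n k
  have h5 : (5 : ℝ) ^ (k + 1) = 25 * (5 : ℝ) ^ (k - 1) := by
    rw [zpow_add_one₀ (by norm_num), zpow_sub_one₀ (by norm_num)]; ring
  -- Only `(√12)² = 12` enters, since the times `k + 1` and `k - 1` differ by two steps.
  have h12 : Real.sqrt 12 ^ (k + 1) = 12 * Real.sqrt 12 ^ (k - 1) := by
    rw [show k + 1 = (k - 1) + 2 by ring, zpow_add₀ (by positivity), zpow_ofNat,
      Real.sq_sqrt (by norm_num), mul_comm]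
  -- Everything becomes a polynomial in `5 ^ (k - 1)`, `(√12) ^ (k - 1)`, `3 ^ n`, `(22/3) ^ n`;
  -- the squares cancel termwise and the cross terms cancel by the choice of constants.
  simp only [hG, hF, add_sub_cancel_right, h5, h12,
    zpow_add_one₀ (show (3 : ℝ) ≠ 0 by norm_num), zpow_sub_one₀ (show (3 : ℝ) ≠ 0 by norm_num),
    zpow_add_one₀ (show (22 / 3 : ℝ) ≠ 0 by norm_num),
    zpow_sub_one₀ (show (22 / 3 : ℝ) ≠ 0 by norm_num)]
  generalize (5 : ℝ) ^ (k - 1) = x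
  generalize Real.sqrt 12 ^ (k - 1) = y
  generalize (3 : ℝ) ^ n = u
  generalize (22 / 3 : ℝ) ^ n = v
  constructor <;> ring
end

section
/- Let λ, μ, α be real constants with μ ≠ 0 and α ≠ 0, and let u, v, Φ, Ψ : ℤ × ℤ → ℝ be nowhere vanishing and satisfy, for all n, k ∈ ℤ: (L2) Φ_{n+1}^k v_{n+1}^k + α Ψ_n^k v_{n+1}^k + (2/3)μ Φ_n^k v_n^k = 0; (L3) Φ_{n+1}^{k+1} u_{n+1}^{k−1} v_n^{k−1} + λ Φ_n^{k−1} u_{n+1}^{k−1} v_n^{k−1} + μ Φ_n^{k+1} u_{n+1}^{k+1} v_n^{k+1} = 0; (L4) Ψ_{n+1}^{k+1} u_{n+1}^{k−1} v_{n+1}^{k−1} + λ Ψ_n^{k−1} u_{n+1}^{k−1} v_{n+1}^{k−1} + μ Ψ_n^{k+1} u_{n+1}^{k+1} v_{n+1}^{k+1} = 0. Then for all n, k ∈ ℤ: −2 u_{n+1}^{k−1} u_{n+2}^{k−1} v_{n+1}^{k−1} v_{n+1}^{k+1} + 2 u_{n+1}^{k−1} u_{n+2}^{k−1} v_n^{k−1}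 v_{n+2}^{k+1} − 3 u_{n+1}^{k+1} u_{n+2}^{k−1} v_{n+1}^{k+1} v_{n+2}^{k+1} + 3 u_{n+1}^{k−1} u_{n+2}^{k+1} v_{n+1}^{k+1} v_{n+2}^{k+1} = 0; equivalently, the quantity (2 u_{n+1}^{k−1} v_n^{k−1} − 3 u_{n+1}^{k+1} v_{n+1}^{k+1}) / (u_{n+1}^{k−1} v_{n+1}^{k+1}) is independent of n. -/
/-! Substituting `α Ψ_n = -Φ_{n+1} - (2/3) μ Φ_n v_n / v_{n+1}` from (L2) into (L4), and then
removing `Φ_{n+2}^{k+1} + λ Φ_{n+1}^{k-1}` and `λ Φ_n^{k-1}` with (L3) at `n + 1` and `n`, leaves a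
relation in `Φ_n^{k+1}` and `Φ_{n+1}^{k+1}` only. The coefficient of `Φ_n^{k+1}` cancels and that of
`Φ_{n+1}^{k+1}` is, up to nonvanishing factors, `μ` times the claimed polynomial. The quotient form
is this identity after cross-multiplication. -/

/-- Compatibility of the Lax equations (L2), (L3), (L4): elimination of `Φ, Ψ` yields a
polynomial identity in `u, v`, equivalently the quantity
`(2 u_{n+1}^{k-1} v_n^{k-1} - 3 u_{n+1}^{k+1} v_{n+1}^{k+1})/(u_{n+1}^{k-1} v_{n+1}^{k+1})`
is independent of `n`. -/
theorem stmt_12 (lam mu alp : ℝ) (hmu : mu ≠ 0) (halp : alp ≠ 0)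
    (u v Φ Ψ : ℤ → ℤ → ℝ)
    (hune : ∀ n k : ℤ, u n k ≠ 0) (hvne : ∀ n k : ℤ, v n k ≠ 0)
    (hΦne : ∀ n k : ℤ, Φ n k ≠ 0) (hΨne : ∀ n k : ℤ, Ψ n k ≠ 0)
    (hL2 : ∀ n k : ℤ,
      Φ (n + 1) k * v (n + 1) k + alp * Ψ n k * v (n + 1) k
        + (2 / 3) * mu * Φ n k * v n k = 0)
    (hL3 : ∀ n k : ℤ,
      Φ (n + 1) (k + 1) * u (n + 1) (k - 1) * v n (k - 1)
        + lam * Φ n (k - 1) * u (n + 1) (k - 1) * v n (k - 1)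
        + mu * Φ n (k + 1) * u (n + 1) (k + 1) * v n (k + 1) = 0)
    (hL4 : ∀ n k : ℤ,
      Ψ (n + 1) (k + 1) * u (n + 1) (k - 1) * v (n + 1) (k - 1)
        + lam * Ψ n (k - 1) * u (n + 1) (k - 1) * v (n + 1) (k - 1)
        + mu * Ψ n (k + 1) * u (n + 1) (k + 1) * v (n + 1) (k + 1) = 0) :
    ∀ n k : ℤ,
      (-2 * u (n + 1) (k - 1) * u (n + 2) (k - 1) * v (n + 1) (k - 1) * v (n + 1) (k + 1)
          + 2 * u (n + 1) (k - 1) * u (n + 2) (k - 1) * v n (k - 1) * v (n + 2) (k + 1)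
          - 3 * u (n + 1) (k + 1) * u (n + 2) (k - 1) * v (n + 1) (k + 1) * v (n + 2) (k + 1)
          + 3 * u (n + 1) (k - 1) * u (n + 2) (k + 1) * v (n + 1) (k + 1) * v (n + 2) (k + 1)
        = 0) ∧
      (2 * u (n + 2) (k - 1) * v (n + 1) (k - 1) - 3 * u (n + 2) (k + 1) * v (n + 2) (k + 1))
          / (u (n + 2) (k - 1) * v (n + 2) (k + 1))
        = (2 * u (n + 1) (k - 1) * v n (k - 1) - 3 * u (n + 1) (k + 1) * v (n + 1) (k + 1))
          / (u (n + 1) (k - 1) * v (n + 1) (k + 1)) := by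
  intro n k
  have e1 := hL2 n (k + 1)
  have e2 := hL2 (n + 1) (k + 1)
  have e3 := hL2 n (k - 1)
  have e4 := hL3 n k
  have e5 := hL3 (n + 1) k
  have e6 := hL4 n k
  rw [show n + 1 + 1 = n + 2 by ring] at e2 e5
  have hP : -2 * u (n + 1) (k - 1) * u (n + 2) (k - 1) * v (n + 1) (k - 1) * v (n + 1) (k + 1)
      + 2 * u (n + 1) (k - 1) * u (n + 2) (k - 1) * v n (k - 1) * v (n + 2) (k + 1)
      - 3 * u (n + 1) (k + 1) * u (n + 2) (k - 1) * v (n + 1) (k + 1) * v (n + 2) (k + 1)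
      + 3 * u (n + 1) (k - 1) * u (n + 2) (k + 1) * v (n + 1) (k + 1) * v (n + 2) (k + 1)
      = 0 := by
    apply (mul_eq_zero.mp ?_).resolve_left (mul_ne_zero hmu (hΦne (n + 1) (k + 1)))
    -- The elimination described above, with denominators cleared by
    -- `3 u_{n+1}^{k-1} u_{n+2}^{k-1} v_{n+1}^{k-1} v_{n+2}^{k+1}`.
    linear_combination
      (-3 * u (n + 1) (k - 1) * u (n + 2) (k - 1) * v (n + 1) (k - 1)) * e2
      - 3 * lam * u (n + 1) (k - 1) * u (n + 2) (k - 1) * v (n + 2) (k + 1) * e3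
      - 3 * mu * u (n + 1) (k + 1) * u (n + 2) (k - 1) * v (n + 2) (k + 1) * e1
      + 3 * alp * u (n + 2) (k - 1) * v (n + 2) (k + 1) * e6
      + 3 * u (n + 1) (k - 1) * v (n + 2) (k + 1) * e5
      + 2 * mu * u (n + 2) (k - 1) * v (n + 2) (k + 1) * e4
  refine ⟨hP, ?_⟩
  rw [div_eq_div_iff (mul_ne_zero (hune _ _) (hvne _ _)) (mul_ne_zero (hune _ _) (hvne _ _))]
  linear_combination -hP
end

section
/- Let λ, μ, γ be real constants with μ ≠ 0 and γ ≠ 0, and let u, v, Φ, Ψ : ℤ × ℤ → ℝ be nowhere vanishing and satisfy, for all n, k ∈ ℤ: (L1) Φ_n^k u_{n+1}^k v_{n+1}^k + γ Ψ_n^k u_{n+1}^k v_{n+1}^k − 2μ Φ_{n−1}^k u_n^k v_{n−1}^k = 0; (L3) Φ_{n+1}^{k+1} u_{n+1}^{k−1} v_n^{k−1} + λ Φ_n^{k−1} u_{n+1}^{k−1} v_n^{k−1} + μ Φ_n^{k+1} u_{n+1}^{k+1} v_n^{k+1} = 0; (L4) Ψ_{n+1}^{k+1} u_{n+1}^{k−1}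 v_{n+1}^{k−1} + λ Ψ_n^{k−1} u_{n+1}^{k−1} v_{n+1}^{k−1} + μ Ψ_n^{k+1} u_{n+1}^{k+1} v_{n+1}^{k+1} = 0. Then for all n, k ∈ ℤ: −2 u_{n+1}^{k−1} u_{n+1}^{k+1} v_n^{k−1} v_n^{k+1} v_{n+1}^{k−1} + 2 u_n^{k−1} u_{n+2}^{k+1} v_{n−1}^{k−1} v_n^{k−1} v_{n+2}^{k+1} − u_{n+1}^{k+1} u_{n+2}^{k+1} v_n^{k+1} v_{n+1}^{k−1} v_{n+2}^{k+1} + u_{n+1}^{k+1} u_{n+2}^{k+1} v_n^{k−1} v_{n+1}^{k+1} v_{n+2}^{k+1} = 0; equivalently, the quantity (2 u_n^{k−1} v_{n−1}^{k−1} + u_{n+1}^{k+1} v_{n+1}^{k+1})·v_n^{k−1} / (u_{n+1}^{k+1} v_{n+1}^{k+1} v_n^{k+1}) is independent of n. -/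
/-!
Multiplying (L4) by `γ` and substituting `γ Ψ` from (L1) gives a linear relation among values of
`Φ` alone. Using (L3) at `n` and at `n - 1` to replace `λ Φ n (k - 1)` and `λ Φ (n - 1) (k - 1)`,
the coefficients of `Φ (n + 1) (k + 1)` and `Φ (n - 1) (k + 1)` cancel, and what remains is
`μ Φ n (k + 1)` times the asserted polynomial in `u, v`. As `μ Φ n (k + 1) ≠ 0`, that polynomial
vanishes; clearing denominators turns it into the `n`-independence of the quotient.
-/

/-- Compatibility of the Lax equations (L1), (L3), (L4): elimination of `Φ, Ψ` yields a
polynomial identity in `u, v`, equivalently the quantity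
`(2 u_n^{k-1} v_{n-1}^{k-1} + u_{n+1}^{k+1} v_{n+1}^{k+1}) v_n^{k-1} /
  (u_{n+1}^{k+1} v_{n+1}^{k+1} v_n^{k+1})` is independent of `n`. -/
theorem stmt_13 (lam mu gam : ℝ) (hmu : mu ≠ 0) (hgam : gam ≠ 0)
    (u v Φ Ψ : ℤ → ℤ → ℝ)
    (hune : ∀ n k : ℤ, u n k ≠ 0) (hvne : ∀ n k : ℤ, v n k ≠ 0)
    (hΦne : ∀ n k : ℤ, Φ n k ≠ 0) (hΨne : ∀ n k : ℤ, Ψ n k ≠ 0)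
    (hL1 : ∀ n k : ℤ,
      Φ n k * u (n + 1) k * v (n + 1) k + gam * Ψ n k * u (n + 1) k * v (n + 1) k
        - 2 * mu * Φ (n - 1) k * u n k * v (n - 1) k = 0)
    (hL3 : ∀ n k : ℤ,
      Φ (n + 1) (k + 1) * u (n + 1) (k - 1) * v n (k - 1)
        + lam * Φ n (k - 1) * u (n + 1) (k - 1) * v n (k - 1)
        + mu * Φ n (k + 1) * u (n + 1) (k + 1) * v n (k + 1) = 0)
    (hL4 : ∀ n k : ℤ,
      Ψ (n + 1) (k + 1) * u (n + 1) (k - 1) * v (n + 1) (k - 1)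
        + lam * Ψ n (k - 1) * u (n + 1) (k - 1) * v (n + 1) (k - 1)
        + mu * Ψ n (k + 1) * u (n + 1) (k + 1) * v (n + 1) (k + 1) = 0) :
    ∀ n k : ℤ,
      (-2 * u (n + 1) (k - 1) * u (n + 1) (k + 1) * v n (k - 1) * v n (k + 1) * v (n + 1) (k - 1)
          + 2 * u n (k - 1) * u (n + 2) (k + 1) * v (n - 1) (k - 1) * v n (k - 1) * v (n + 2) (k + 1)
          - u (n + 1) (k + 1) * u (n + 2) (k + 1) * v n (k + 1) * v (n + 1) (k - 1) * v (n + 2) (k + 1)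
          + u (n + 1) (k + 1) * u (n + 2) (k + 1) * v n (k - 1) * v (n + 1) (k + 1) * v (n + 2) (k + 1)
        = 0) ∧
      (2 * u (n + 1) (k - 1) * v n (k - 1) + u (n + 2) (k + 1) * v (n + 2) (k + 1))
            * v (n + 1) (k - 1)
          / (u (n + 2) (k + 1) * v (n + 2) (k + 1) * v (n + 1) (k + 1))
        = (2 * u n (k - 1) * v (n - 1) (k - 1) + u (n + 1) (k + 1) * v (n + 1) (k + 1))
            * v n (k - 1)
          / (u (n + 1) (k + 1) * v (n + 1) (k + 1) * v n (k + 1)) := by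
  intro n k
  have hL1' := hL1 (n + 1) (k + 1)
  have hL3' := hL3 (n - 1) k
  rw [show n + 1 + 1 = n + 2 by ring, show n + 1 - 1 = n by ring] at hL1'
  rw [show n - 1 + 1 = n by ring] at hL3'
  have key : -2 * u (n + 1) (k - 1) * u (n + 1) (k + 1) * v n (k - 1) * v n (k + 1)
            * v (n + 1) (k - 1)
          + 2 * u n (k - 1) * u (n + 2) (k + 1) * v (n - 1) (k - 1) * v n (k - 1)
            * v (n + 2) (k + 1)
          - u (n + 1) (k + 1) * u (n + 2) (k + 1) * v n (k + 1) * v (n + 1) (k - 1)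
            * v (n + 2) (k + 1)
          + u (n + 1) (k + 1) * u (n + 2) (k + 1) * v n (k - 1) * v (n + 1) (k + 1)
            * v (n + 2) (k + 1) = 0 := by
    refine (mul_eq_zero.mp ?_).resolve_left (mul_ne_zero hmu (hΦne n (k + 1)))
    -- (L1) removes the three values of `Ψ` from (L4), and (L3) at `n` and `n - 1` then removes
    -- `Φ n (k - 1)` and `Φ (n - 1) (k - 1)`; only `Φ n (k + 1)` survives.
    linear_combination
      (-gam * v n (k - 1) * u (n + 2) (k + 1) * v (n + 2) (k + 1)) * hL4 n k
      + (u (n + 1) (k - 1) * v (n + 1) (k - 1) * v n (k - 1)) * hL1'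
      + (lam * v n (k - 1) * u (n + 2) (k + 1) * v (n + 2) (k + 1)) * hL1 n (k - 1)
      + (mu * v n (k - 1) * u (n + 2) (k + 1) * v (n + 2) (k + 1)) * hL1 n (k + 1)
      - (v (n + 1) (k - 1) * u (n + 2) (k + 1) * v (n + 2) (k + 1)) * hL3 n k
      + (2 * mu * v n (k - 1) * u (n + 2) (k + 1) * v (n + 2) (k + 1)) * hL3'
  refine ⟨key, ?_⟩
  have h1 := hune (n + 1) (k + 1)
  have h2 := hune (n + 2) (k + 1)
  have h3 := hvne n (k + 1)
  have h4 := hvne (n + 1) (k + 1)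
  have h5 := hvne (n + 2) (k + 1)
  rw [div_eq_div_iff (by positivity) (by positivity)]
  -- Cross-multiplied, the two sides differ by `-v (n + 1) (k + 1)` times the polynomial identity.
  linear_combination (-v (n + 1) (k + 1)) * key
end

section
/- Let q, Θ : ℤ → ℝ → ℝ be differentiable functions of t. Define a_n = exp(q_n − q_{n+1}) / (1 + exp(q_n − q_{n+1})) and b_n = exp(Θ_n)·(1 + exp(q_{n−1} − q_n))^{1/2}·(1 + exp(q_n − q_{n+1}))^{1/2}. Suppose the Hamiltonian equations of motion hold for all n ∈ ℤ and t ∈ ℝ: q_n' = b_n and Θ_n' = (1/2)·a_{n−1}·(b_n + b_{n−1}) − (1/2)·a_n·(b_n + b_{n+1}). Then for all n and t: b_n' = b_n(b_{n−1}a_{n−1} − a_n b_{n+1}) and a_n' = a_n(1 − a_n)(b_n − b_{n+1}). -/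
/-!
Since `b_n` is a product of an exponential and two square roots, its logarithmic derivative is
`Θ_n'` plus those of the square roots. With `u = q_n - q_{n+1}`, the logarithmic derivative of
`(1 + exp u)^{1/2}` is `(1/2) a_n u' = (1/2) a_n (b_n - b_{n+1})` (`hasDerivAt_sqrt_one_add_exp`),
and in the sum the terms `(1/2) a_{n-1} b_n` and `(1/2) a_n b_n` cancel against those of `Θ_n'`.
The equation for `a_n` is the logistic derivative `σ' = σ (1 - σ)`
(`hasDerivAt_exp_div_one_add_exp`) composed with `u`.
-/

/-- The derivative is written as the function times its logarithmic derivative. -/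
lemma hasDerivAt_sqrt_one_add_exp {u : ℝ → ℝ} {u' t : ℝ} (hu : HasDerivAt u u' t) :
    HasDerivAt (fun s => Real.sqrt (1 + Real.exp (u s)))
      (Real.sqrt (1 + Real.exp (u t)) *
        (1 / 2 * (Real.exp (u t) / (1 + Real.exp (u t))) * u')) t := by
  have hpos : 0 < 1 + Real.exp (u t) := by positivity
  convert (hu.exp.const_add 1).sqrt hpos.ne' using 1
  have hs : Real.sqrt (1 + Real.exp (u t)) ≠ 0 := (Real.sqrt_pos.2 hpos).ne'
  have hsq : Real.sqrt (1 + Real.exp (u t)) ^ 2 = 1 + Real.exp (u t) := Real.sq_sqrt hpos.le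
  field_simp
  rw [hsq]

lemma hasDerivAt_exp_div_one_add_exp {u : ℝ → ℝ} {u' t : ℝ} (hu : HasDerivAt u u' t) :
    HasDerivAt (fun s => Real.exp (u s) / (1 + Real.exp (u s)))
      (Real.exp (u t) / (1 + Real.exp (u t)) *
        (1 - Real.exp (u t) / (1 + Real.exp (u t))) * u') t := by
  have hpos : 0 < 1 + Real.exp (u t) := by positivity
  refine (hu.exp.fun_div (hu.exp.const_add 1) hpos.ne').congr_deriv ?_
  field_simp

/-- From the Hamiltonian equations of motion of the relativistic Toda lattice in the
canonical variables `q, Θ`, the variables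
`a_n = exp(q_n - q_{n+1})/(1 + exp(q_n - q_{n+1}))` and
`b_n = exp(Θ_n) (1 + exp(q_{n-1} - q_n))^{1/2} (1 + exp(q_n - q_{n+1}))^{1/2}`
satisfy `b_n' = b_n (b_{n-1} a_{n-1} - a_n b_{n+1})` and
`a_n' = a_n (1 - a_n)(b_n - b_{n+1})`. -/
theorem stmt_14 (q Θ : ℤ → ℝ → ℝ)
    (hq : ∀ n, Differentiable ℝ (q n)) (hΘ : ∀ n, Differentiable ℝ (Θ n))
    (a b : ℤ → ℝ → ℝ)
    (ha : ∀ (n : ℤ) (t : ℝ),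
      a n t = Real.exp (q n t - q (n + 1) t) / (1 + Real.exp (q n t - q (n + 1) t)))
    (hb : ∀ (n : ℤ) (t : ℝ),
      b n t = Real.exp (Θ n t) * Real.sqrt (1 + Real.exp (q (n - 1) t - q n t))
        * Real.sqrt (1 + Real.exp (q n t - q (n + 1) t)))
    (hqeq : ∀ (n : ℤ) (t : ℝ), deriv (q n) t = b n t)
    (hΘeq : ∀ (n : ℤ) (t : ℝ),
      deriv (Θ n) t = (1 / 2) * a (n - 1) t * (b n t + b (n - 1) t)
        - (1 / 2) * a n t * (b n t + b (n + 1) t)) :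
    ∀ (n : ℤ) (t : ℝ),
      deriv (b n) t = b n t * (b (n - 1) t * a (n - 1) t - a n t * b (n + 1) t) ∧
      deriv (a n) t = a n t * (1 - a n t) * (b n t - b (n + 1) t) := by
  intro n t
  have hu : ∀ m : ℤ, HasDerivAt (fun s => q m s - q (m + 1) s) (b m t - b (m + 1) t) t := by
    intro m
    rw [← hqeq m t, ← hqeq (m + 1) t]
    exact (hq m t).hasDerivAt.sub (hq (m + 1) t).hasDerivAt
  constructor
  · have h1 := hasDerivAt_sqrt_one_add_exp (hu n)
    have h0 := hasDerivAt_sqrt_one_add_exp (hu (n - 1))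
    rw [← ha] at h0 h1
    simp only [sub_add_cancel] at h0
    have hbn : b n = fun s => Real.exp (Θ n s) * Real.sqrt (1 + Real.exp (q (n - 1) s - q n s))
        * Real.sqrt (1 + Real.exp (q n s - q (n + 1) s)) := funext (hb n)
    have h := ((hΘ n t).hasDerivAt.exp.fun_mul h0).fun_mul h1
    rw [← hbn] at h
    rw [h.deriv, hΘeq]
    -- Only the leading factor `b n t` is expanded; the others must stay atomic for `ring`.
    have hlead := congrArg
      (fun x => x * (b (n - 1) t * a (n - 1) t - a n t * b (n + 1) t)) (hb n t)
    refine Eq.trans ?_ hlead.symm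
    ring
  · have h := hasDerivAt_exp_div_one_add_exp (hu n)
    rw [← ha, ← show a n = _ from funext (ha n)] at h
    exact h.deriv
end
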